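/- Let P be a reflexive lattice polytope of dimension d, i.e. there is a lattice point p in the interior of cone(P) at height 1 with cone°(P) ∩ ℤ^{d+1} = p + (cone(P) ∩ ℤ^{d+1}). Then the h*-polynomial of P is palindromic: h*_k = h*_{d-k} for all 0 ≤ k ≤ d. -/

import Mathlib

open scoped Pointwise

/-- The cone over a polytope `P ⊂ ℝ^d`, placed at height 1 in `ℝ^d × ℝ`. -/
def polyCone {d : ℕ} (P : Set (Fin d → ℝ)) : Set ((Fin d → ℝ) × ℝ) :=
  {x | ∃ r : ℝ, 0 ≤ r ∧ ∃ p ∈ P, x = (r • p, r)}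

/-- Cast a lattice point of `ℤ^d × ℤ` into `ℝ^d × ℝ`. -/
def latticeCastPair {d : ℕ} (z : (Fin d → ℤ) × ℤ) : (Fin d → ℝ) × ℝ :=
  ((fun j => (z.1 j : ℝ)), (z.2 : ℝ))


set_option linter.unusedSectionVars false
namespace Hibi
open Filter Topology

section tri
variable {E : Type*} [NormedAddCommGroup E] [NormedSpace ℝ E] [FiniteDimensional ℝ E]
variable {ι : Type*} [Fintype ι]

/-- index sets of bases -/
def IsB (a : ι → E) (B : Finset ι) : Prop :=
  LinearIndependent ℝ (fun i : B => a i) ∧ ⊤ ≤ Submodule.span ℝ (Set.range fun i : B => a i)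

abbrev Bs (a : ι → E) := {B : Finset ι // IsB a B}

noncomputable instance (a : ι → E) : Fintype (Bs a) := by
  classical
  unfold Bs
  infer_instance

noncomputable def bas {a : ι → E} (B : Bs a) : Module.Basis B.1 ℝ E :=
  Module.Basis.mk B.2.1 B.2.2

lemma bas_apply {a : ι → E} (B : Bs a) (b : B.1) : bas B b = a b := by
  simp [bas]

def KB {a : ι → E} (B : Bs a) : Set E := {x | ∀ b, 0 ≤ (bas B).repr x b}

def KK (a : ι → E) : Set E := {x | ∃ l : ι → ℝ, (∀ i, 0 ≤ l i) ∧ ∑ i, l i • a i = x}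

def Gen (a : ι → E) (y : E) : Prop :=
  ∀ S : Finset ι, Submodule.span ℝ (a '' S) ≠ ⊤ → y ∉ Submodule.span ℝ (a '' S)

lemma Gen.neg {a : ι → E} {y : E} (h : Gen a y) : Gen a (-y) := by
  intro S hS hy
  exact h S hS (by simpa using hy)

lemma sum_ext_B [DecidableEq ι] (B : Finset ι) {M : Type*} [AddCommMonoid M] [Module ℝ M] (f : B → ℝ) (g : ι → M) :
    ∑ i, (if h : i ∈ B then f ⟨i, h⟩ else 0) • g i = ∑ b : B, f b • g b := by
  rw [← Finset.sum_subset (Finset.subset_univ B), ← Finset.sum_coe_sort B]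
  · refine Finset.sum_congr rfl fun b _ => ?_
    simp
  · intro i _ hi
    simp [hi]

lemma KB_sub {a : ι → E} (B : Bs a) : KB B ⊆ KK a := by
  classical
  intro x hx
  refine ⟨fun i => if h : i ∈ B.1 then (bas B).repr x ⟨i, h⟩ else 0, fun i => ?_, ?_⟩
  · dsimp only
    split_ifs with h
    · exact hx _
    · exact le_rfl
  · rw [sum_ext_B B.1 (fun b => (bas B).repr x b) a]
    conv_rhs => rw [← (bas B).sum_repr x]
    simp [bas_apply]

lemma Gen.repr_ne {a : ι → E} {y : E} (h : Gen a y) (B : Bs a) (b : B.1) :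
    (bas B).repr y b ≠ 0 := by
  classical
  intro h0
  refine h (B.1.erase b) ?_ ?_
  · intro htop
    have hle : Submodule.span ℝ (a '' (B.1.erase b : Finset ι)) ≤ LinearMap.ker ((bas B).coord b) := by
      rw [Submodule.span_le]
      rintro _ ⟨i, hi, rfl⟩
      simp only [Finset.coe_erase, Set.mem_sdiff, Finset.mem_coe, Set.mem_singleton_iff] at hi
      have : a i = bas B ⟨i, hi.1⟩ := by rw [bas_apply]
      simp only [SetLike.mem_coe, LinearMap.mem_ker]
      rw [this, Module.Basis.coord_apply, Module.Basis.repr_self, Finsupp.single_apply, if_neg]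
      intro h; apply hi.2; rw [← h]
    rw [htop] at hle
    have := hle (Submodule.mem_top : bas B b ∈ ⊤)
    simp at this
  · rw [← (bas B).sum_repr y]
    refine Submodule.sum_mem _ fun c _ => ?_
    by_cases hc : c = b
    · subst hc; rw [h0]; simp
    · refine Submodule.smul_mem _ _ (Submodule.subset_span ⟨c, ?_, (bas_apply B c).symm⟩)
      rw [Finset.mem_coe, Finset.mem_erase]
      exact ⟨fun h => hc (Subtype.ext h), c.2⟩

lemma ev_not_mem (H : Submodule ℝ E) (x q : E) (hq : q ∉ H) :
    ∀ᶠ e : ℝ in 𝓝[>] 0, x + e • q ∉ H := by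
  by_cases h : ∃ e0 : ℝ, 0 < e0 ∧ x + e0 • q ∈ H
  · obtain ⟨e0, h0, h1⟩ := h
    filter_upwards [Ioo_mem_nhdsGT h0] with e he h2
    have h3 := H.sub_mem h1 h2
    have h4 : (x + e0 • q) - (x + e • q) = (e0 - e) • q := by module
    rw [h4] at h3
    exact hq ((H.smul_mem_iff (by linarith [he.2])).1 h3)
  · push Not at h
    filter_upwards [self_mem_nhdsWithin] with e he
    exact h e he

lemma Gen.ev {a : ι → E} {q : E} (h : Gen a q) (x : E) :
    ∀ᶠ e : ℝ in 𝓝[>] 0, Gen a (x + e • q) := by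
  unfold Gen
  rw [eventually_all]
  intro S
  by_cases hS : Submodule.span ℝ (a '' S) = ⊤
  · simp [hS]
  · filter_upwards [ev_not_mem _ x q (h S hS)] with e he _
    exact he

/-- exists generic point in an open set -/
lemma exists_avoid {F : Type*} [NormedAddCommGroup F] [NormedSpace ℝ F] [FiniteDimensional ℝ F]
    {κ : Type*} [Finite κ] (H : κ → Submodule ℝ F) (hH : ∀ k, H k ≠ ⊤)
    (U : Set F) (hU : IsOpen U) (hne : U.Nonempty) : ∃ x ∈ U, ∀ k, x ∉ H k := by
  let _ : MeasurableSpace F := borel F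
  have _ : BorelSpace F := ⟨rfl⟩
  let μ : MeasureTheory.Measure F := MeasureTheory.Measure.addHaar
  by_contra hcon
  push Not at hcon
  have h1 : U ⊆ ⋃ k, (H k : Set F) := by
    intro x hx
    obtain ⟨k, hk⟩ := hcon x hx
    exact Set.mem_iUnion.2 ⟨k, hk⟩
  have h2 : μ (⋃ k, (H k : Set F)) = 0 := by
    rw [MeasureTheory.measure_iUnion_null_iff]
    exact fun k => MeasureTheory.Measure.addHaar_submodule μ _ (hH k)
  exact (hU.measure_pos μ hne).ne' (MeasureTheory.measure_mono_null h1 h2)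

lemma exists_gen (a : ι → E) (U : Set E) (hU : IsOpen U) (hne : U.Nonempty) :
    ∃ x ∈ U, Gen a x := by
  obtain ⟨x, hx, h⟩ := exists_avoid
    (κ := {S : Finset ι // Submodule.span ℝ (a '' (S : Set ι)) ≠ ⊤})
    (fun S => Submodule.span ℝ (a '' (S.1 : Set ι))) (fun S => S.2) U hU hne
  exact ⟨x, hx, fun S hS => h ⟨S, hS⟩⟩

def GenW (a : ι → E) (w : ι → ℝ) : Prop :=
  ∀ (S : Finset ι) (i : ι), i ∉ S → a i ∈ Submodule.span ℝ (a '' S) →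
    ∃ c : ι → ℝ, (∀ j, j ∉ S → c j = 0) ∧ a i = ∑ j, c j • a j ∧ w i ≠ ∑ j, c j * w j

lemma exists_genW (a : ι → E) : ∃ w, GenW a w := by
  classical
  have key : ∀ k : {p : Finset ι × ι // p.2 ∉ p.1 ∧ a p.2 ∈ Submodule.span ℝ (a '' (p.1 : Set ι))},
      ∃ c : ι → ℝ, (∀ j, j ∉ k.1.1 → c j = 0) ∧ a k.1.2 = ∑ j, c j • a j := by
    rintro ⟨⟨S, i⟩, h1, h2⟩
    dsimp only at *
    rw [Submodule.mem_span_image_finset_iff_exists_fun] at h2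
    obtain ⟨c, hc⟩ := h2
    refine ⟨fun j => if h : j ∈ S then c ⟨j, h⟩ else 0, fun j hj => by simp [hj], ?_⟩
    rw [sum_ext_B S c a]
    exact hc.symm
  choose c hc1 hc2 using key
  have hne : ∀ k, LinearMap.ker ((LinearMap.proj k.1.2 : (ι → ℝ) →ₗ[ℝ] ℝ) -
      ∑ j, c k j • (LinearMap.proj j : (ι → ℝ) →ₗ[ℝ] ℝ)) ≠ ⊤ := by
    intro k htop
    have h : (Pi.single k.1.2 1 : ι → ℝ) ∈ (⊤ : Submodule ℝ (ι → ℝ)) := Submodule.mem_top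
    rw [← htop] at h
    simp [Pi.single_apply, hc1 k k.1.2 k.2.1] at h
  obtain ⟨w, -, hw⟩ := exists_avoid _ hne Set.univ isOpen_univ Set.univ_nonempty
  · refine ⟨w, fun S i hi h => ⟨c ⟨(S, i), hi, h⟩, hc1 ⟨(S, i), hi, h⟩, hc2 ⟨(S, i), hi, h⟩, ?_⟩⟩
    have := hw ⟨(S, i), hi, h⟩
    simp only [LinearMap.mem_ker, LinearMap.sub_apply, LinearMap.sum_apply, LinearMap.smul_apply,
      LinearMap.proj_apply, smul_eq_mul] at this
    intro h'
    exact this (sub_eq_zero.2 h')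

noncomputable def phi {a : ι → E} (w : ι → ℝ) (B : Bs a) : E →ₗ[ℝ] ℝ :=
  (bas B).constr ℝ (fun b : B.1 => w b)

lemma phi_a {a : ι → E} (w : ι → ℝ) (B : Bs a) (i : ι) (hi : i ∈ B.1) : phi w B (a i) = w i := by
  have := (bas B).constr_basis ℝ (fun b : B.1 => w b) ⟨i, hi⟩
  rwa [bas_apply] at this

lemma phi_eq {a : ι → E} (w : ι → ℝ) (B : Bs a) (x : E) :
    phi w B x = ∑ b, (bas B).repr x b * w b := by
  rw [phi, Module.Basis.constr_apply_fintype]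
  simp [Module.Basis.equivFun_apply]

def TT (a : ι → E) (w : ι → ℝ) : Set (Bs a) := {B | ∀ i, phi w B (a i) ≤ w i}

lemma tri_unique_aux {a : ι → E} {w : ι → ℝ} (hw : GenW a w) {y : E} (hy : Gen a y)
    {B B' : Bs a} (hB : B ∈ TT a w) (hB' : B' ∈ TT a w) (h : y ∈ KB B) (h' : y ∈ KB B') :
    B.1 ⊆ B'.1 := by
  have le : ∀ {B B' : Bs a}, B' ∈ TT a w → y ∈ KB B → phi w B' y ≤ phi w B y := by
    intro B B' hB' h
    conv_lhs => rw [← (bas B).sum_repr y]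
    rw [phi_eq w B, map_sum]
    refine Finset.sum_le_sum fun b _ => ?_
    rw [map_smul, bas_apply, smul_eq_mul]
    exact mul_le_mul_of_nonneg_left (hB' b) (h b)
  have heq := le_antisymm (le hB' h) (le hB h')
  conv_lhs at heq => rw [← (bas B).sum_repr y]
  rw [phi_eq w B, map_sum, Finset.sum_eq_sum_iff_of_le] at heq
  · intro i hi
    by_contra hi'
    obtain ⟨c, hc, hc1, hc2⟩ := hw B'.1 i hi' (by
      have : a '' (B'.1 : Set ι) = Set.range (fun i : B'.1 => a i) := by
        ext x; simp
      rw [this]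
      exact B'.2.2 Submodule.mem_top)
    have h1 := heq ⟨i, hi⟩ (Finset.mem_univ _)
    rw [map_smul, bas_apply, smul_eq_mul] at h1
    have h2 := mul_left_cancel₀ (hy.repr_ne B _) h1
    apply hc2
    dsimp only at h2
    rw [← h2, hc1, map_sum]
    refine Finset.sum_congr rfl fun j _ => ?_
    rw [map_smul, smul_eq_mul]
    by_cases hj : j ∈ B'.1
    · rw [phi_a w B' j hj]
    · simp [hc j hj]
  · intro b _
    rw [map_smul, bas_apply, smul_eq_mul]
    exact mul_le_mul_of_nonneg_left (hB' b) (h b)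

lemma tri_unique {a : ι → E} {w : ι → ℝ} (hw : GenW a w) {y : E} (hy : Gen a y)
    {B B' : Bs a} (hB : B ∈ TT a w) (hB' : B' ∈ TT a w) (h : y ∈ KB B) (h' : y ∈ KB B') :
    B = B' :=
  Subtype.ext (le_antisymm (tri_unique_aux hw hy hB hB' h h') (tri_unique_aux hw hy hB' hB h' h))

lemma perturb {a : ι → E} {w l m : ι → ℝ} {y : E} (hl : ∀ i, 0 ≤ l i) (hly : ∑ i, l i • a i = y)
    (hmin : ∀ l' : ι → ℝ, (∀ i, 0 ≤ l' i) → ∑ i, l' i • a i = y → ∑ i, l i * w i ≤ ∑ i, l' i * w i)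
    (hm : ∑ i, m i • a i = 0) (hm0 : ∀ i, l i = 0 → 0 ≤ m i) : 0 ≤ ∑ i, m i * w i := by
  have : ∀ᶠ e : ℝ in 𝓝[>] 0, ∀ i, 0 ≤ l i + e * m i := by
    rw [eventually_all]
    intro i
    rcases (hl i).eq_or_lt with h | h
    · filter_upwards [self_mem_nhdsWithin] with e he
      rw [← h, zero_add]
      exact mul_nonneg (le_of_lt he) (hm0 i h.symm)
    · have : Tendsto (fun e : ℝ => l i + e * m i) (𝓝 0) (𝓝 (l i + 0 * m i)) := by
        apply Continuous.tendsto; fun_prop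
      rw [zero_mul, add_zero] at this
      filter_upwards [(this.mono_left nhdsWithin_le_nhds).eventually (lt_mem_nhds h)] with e he
      exact he.le
  obtain ⟨e, he, he0⟩ := (this.and self_mem_nhdsWithin).exists
  have he0 : 0 < e := he0
  have := hmin (fun i => l i + e * m i) he (by
    simp only [add_smul, mul_smul, Finset.sum_add_distrib, ← Finset.smul_sum, hm, hly]; simp)
  simp only [add_mul, mul_assoc, Finset.sum_add_distrib, ← Finset.mul_sum] at this
  by_contra hneg
  push Not at hneg
  nlinarith

lemma tri_exists {a : ι → E} (ht : E →ₗ[ℝ] ℝ) (hta : ∀ i, ht (a i) = 1)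
    {w : ι → ℝ} (hw : GenW a w) {y : E} (hy : Gen a y) (hK : y ∈ KK a) :
    ∃ B ∈ TT a w, y ∈ KB B := by
  classical
  let Fs : Set (ι → ℝ) := {l | (∀ i, 0 ≤ l i) ∧ ∑ i, l i • a i = y}
  have hsub : Fs ⊆ Set.Icc 0 (fun _ => ht y) := by
    rintro l ⟨h0, h1⟩
    refine ⟨h0, fun i => ?_⟩
    rw [← h1, map_sum]
    simp only [map_smul, hta, smul_eq_mul, mul_one]
    exact Finset.single_le_sum (fun j _ => h0 j) (Finset.mem_univ i)
  have hcl : IsClosed Fs := by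
    have h1 : IsClosed {l : ι → ℝ | ∀ i, 0 ≤ l i} := by
      simp only [Set.ofPred_forall]
      exact isClosed_iInter fun i => isClosed_le continuous_const (continuous_apply i)
    have h2 : IsClosed {l : ι → ℝ | ∑ i, l i • a i = y} :=
      isClosed_eq (by fun_prop) continuous_const
    exact h1.inter h2
  have hcpt : IsCompact Fs := isCompact_Icc.of_isClosed_subset hcl hsub
  obtain ⟨l, ⟨hl0, hly⟩, hmin⟩ := hcpt.exists_isMinOn (f := fun l : ι → ℝ => ∑ i, l i * w i) hK
    (by fun_prop)
  have hmin : ∀ l' : ι → ℝ, (∀ i, 0 ≤ l' i) → ∑ i, l' i • a i = y →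
      ∑ i, l i * w i ≤ ∑ i, l' i * w i := fun l' h h' => hmin ⟨h, h'⟩
  let S : Finset ι := Finset.univ.filter fun i => l i ≠ 0
  have hS : ∀ i, i ∈ S ↔ l i ≠ 0 := by simp [S]
  have hind : LinearIndependent ℝ (fun i : S => a i) := by
    by_contra hdep
    rw [linearIndependent_iff_notMem_span] at hdep
    push Not at hdep
    obtain ⟨⟨i, hi⟩, hdep⟩ := hdep
    have himg : (fun i : S => a i) '' (Set.univ \ {⟨i, hi⟩}) = a '' ((S.erase i : Finset ι) : Set ι) := by
      ext x
      simp only [Set.mem_image, Set.mem_sdiff, Set.mem_univ, true_and, Set.mem_singleton_iff,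
        Subtype.exists, Finset.coe_erase, Finset.mem_coe, Subtype.mk.injEq]
      constructor
      · rintro ⟨j, hj, h1, h2⟩; exact ⟨j, ⟨hj, h1⟩, h2⟩
      · rintro ⟨j, ⟨hj, h1⟩, h2⟩; exact ⟨j, hj, h1, h2⟩
    rw [himg] at hdep
    obtain ⟨c, hc, hc1, hc2⟩ := hw (S.erase i) i (by simp) hdep
    have hc' : ∀ j, l j = 0 → c j = 0 := by
      intro j hj
      apply hc
      simp [hS, hj]
    have hi' := (hS i).1 hi
    have e1 := perturb (m := fun j => (if j = i then 1 else 0) - c j) hl0 hly hmin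
      (by simp [sub_smul, ite_smul, hc1]) (by
        intro j hj
        have : j ≠ i := by rintro rfl; exact hi' hj
        simp [this, hc' j hj])
    have e2 := perturb (m := fun j => c j - (if j = i then 1 else 0)) hl0 hly hmin
      (by simp [sub_smul, ite_smul, hc1]) (by
        intro j hj
        have : j ≠ i := by rintro rfl; exact hi' hj
        simp [this, hc' j hj])
    simp [sub_mul] at e1 e2
    exact hc2 (le_antisymm e2 e1)
  have himgS : a '' (S : Set ι) = Set.range (fun i : S => a i) := by
    ext x; simp
  have hsp : Submodule.span ℝ (a '' (S : Set ι)) = ⊤ := by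
    by_contra hne
    apply hy S hne
    rw [← hly]
    refine Submodule.sum_mem _ fun i _ => ?_
    by_cases hi : l i = 0
    · simp [hi]
    · exact Submodule.smul_mem _ _ (Submodule.subset_span ⟨i, (hS i).2 hi, rfl⟩)
  let B : Bs a := ⟨S, hind, by rw [← himgS, hsp]⟩
  have hrepr : y = ∑ b : B.1, l b • bas B b := by
    simp only [bas_apply]
    rw [Finset.sum_coe_sort B.1 (fun i => l i • a i), ← hly]
    symm
    apply Finset.sum_subset (Finset.subset_univ _)
    intro i _ hi
    have : l i = 0 := by
      by_contra h
      exact hi ((hS i).2 h)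
    simp [this]
  refine ⟨B, fun i => ?_, fun b => ?_⟩
  · have := perturb (m := fun j => (if j = i then 1 else 0) -
        (if h : j ∈ B.1 then (bas B).repr (a i) ⟨j, h⟩ else 0)) hl0 hly hmin (by
        simp only [sub_smul, Finset.sum_sub_distrib]
        rw [sum_ext_B B.1 (fun b => (bas B).repr (a i) b) a]
        have := (bas B).sum_repr (a i)
        simp only [bas_apply] at this
        rw [this]
        simp [ite_smul]) (by
        intro j hj
        have : j ∉ B.1 := fun h => (hS j).1 h hj
        simp only [this, dite_false, sub_zero]
        split_ifs <;> norm_num)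
    simp only [sub_mul, Finset.sum_sub_distrib] at this
    have h2 := sum_ext_B B.1 (fun b => (bas B).repr (a i) b) w
    simp only [smul_eq_mul] at h2
    rw [h2] at this
    rw [phi_eq]
    simpa using this
  · have : (bas B).repr y b = l b := by
      conv_lhs => rw [hrepr]
      rw [Module.Basis.repr_sum_self]
    rw [this]
    exact hl0 _

end tri
end Hibi

namespace Hibi
open Filter Topology

section halfopen

def lo (o : Prop) (x : ℝ) : Prop := 0 ≤ x ∧ (o → 0 < x)

lemma lo_ev (x q : ℝ) (hq : q ≠ 0) : ∀ᶠ e : ℝ in 𝓝[>] 0, (0 ≤ x + e * q ↔ lo (q < 0) x) := by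
  have hc : Tendsto (fun e : ℝ => x + e * q) (𝓝[>] 0) (𝓝 x) := by
    have : Tendsto (fun e : ℝ => x + e * q) (𝓝 0) (𝓝 (x + 0 * q)) := by
      apply Continuous.tendsto; fun_prop
    rw [zero_mul, add_zero] at this
    exact this.mono_left nhdsWithin_le_nhds
  rcases lt_trichotomy x 0 with h | h | h
  · filter_upwards [hc.eventually (gt_mem_nhds h)] with e he
    unfold lo
    constructor
    · intro; linarith
    · rintro ⟨_, _⟩; linarith
  · subst h
    filter_upwards [self_mem_nhdsWithin] with e he
    have he : 0 < e := he
    unfold lo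
    rw [zero_add, mul_nonneg_iff_of_pos_left he]
    simp
  · filter_upwards [hc.eventually (lt_mem_nhds h)] with e he
    exact ⟨fun _ => ⟨h.le, fun _ => h⟩, fun _ => he.le⟩

variable {E : Type*} [NormedAddCommGroup E] [NormedSpace ℝ E] [FiniteDimensional ℝ E]
variable {ι : Type*} [Fintype ι]

/-- half-open simplicial cone -/
def HB {a : ι → E} (o : E) (B : Bs a) : Set E := {x | ∀ b, lo ((bas B).repr o b < 0) ((bas B).repr x b)}

lemma HB_sub {a : ι → E} (q : E) (B : Bs a) : HB q B ⊆ KB B := fun _ hx b => (hx b).1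

lemma HB_ev {a : ι → E} {q : E} (hq : Gen a q) (B : Bs a) (x : E) :
    ∀ᶠ e : ℝ in 𝓝[>] 0, (x + e • q ∈ KB B ↔ x ∈ HB q B) := by
  have : ∀ᶠ e : ℝ in 𝓝[>] 0, ∀ b, (0 ≤ (bas B).repr x b + e * (bas B).repr q b ↔
      lo ((bas B).repr q b < 0) ((bas B).repr x b)) := by
    rw [eventually_all]
    exact fun b => lo_ev _ _ (hq.repr_ne B b)
  filter_upwards [this] with e he
  simp only [KB, HB, Set.mem_ofPred_eq]
  refine forall_congr' fun b => ?_
  rw [← he b]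
  simp

lemma HB_unique {a : ι → E} {w : ι → ℝ} (hw : GenW a w) {q : E} (hq : Gen a q) {x : E}
    {B B' : Bs a} (hB : B ∈ TT a w) (hB' : B' ∈ TT a w) (h : x ∈ HB q B) (h' : x ∈ HB q B') :
    B = B' := by
  obtain ⟨e, h1, h2, h3⟩ := ((HB_ev hq B x).and ((HB_ev hq B' x).and (hq.ev x))).exists
  exact tri_unique hw h3 hB hB' (h1.2 h) (h2.2 h')

lemma HB_exists {a : ι → E} (ht : E →ₗ[ℝ] ℝ) (hta : ∀ i, ht (a i) = 1)
    {w : ι → ℝ} (hw : GenW a w) {q : E} (hq : Gen a q) {x : E} :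
    (∃ B ∈ TT a w, x ∈ HB q B) ↔ ∃ᶠ e : ℝ in 𝓝[>] 0, x + e • q ∈ KK a := by
  have hall : ∀ᶠ e : ℝ in 𝓝[>] 0, ∀ B : Bs a, (x + e • q ∈ KB B ↔ x ∈ HB q B) := by
    rw [eventually_all]
    exact fun B => HB_ev hq B x
  constructor
  · rintro ⟨B, hB, hx⟩
    apply Eventually.frequently
    filter_upwards [hall] with e he
    exact KB_sub B ((he B).2 hx)
  · intro h
    obtain ⟨e, h1, h2, h3⟩ := (h.and_eventually (hall.and (hq.ev x))).exists
    obtain ⟨B, hB, hx⟩ := tri_exists ht hta hw h3 h1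
    exact ⟨B, hB, (h2 B).1 hx⟩

end halfopen

section cone
variable {d : ℕ}

lemma mem_polyCone_iff {P : Set (Fin d → ℝ)} (x : Fin d → ℝ) (r : ℝ) :
    (x, r) ∈ polyCone P ↔ 0 ≤ r ∧ x ∈ r • P := by
  constructor
  · rintro ⟨r', h0, p, hp, h⟩
    simp only [Prod.mk.injEq] at h
    obtain ⟨rfl, rfl⟩ := h
    exact ⟨h0, Set.smul_mem_smul_set hp⟩
  · rintro ⟨h0, p, hp, rfl⟩
    exact ⟨r, h0, p, hp, rfl⟩

lemma polyCone_eq (V : Finset (Fin d → ℝ)) (hne : V.Nonempty) :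
    polyCone (convexHull ℝ (V : Set (Fin d → ℝ))) =
      KK (fun v : V => ((v : Fin d → ℝ), (1 : ℝ))) := by
  ext ⟨x, r⟩
  constructor
  · rintro ⟨r', h0, p, hp, h⟩
    rw [Finset.mem_convexHull'] at hp
    obtain ⟨w, hw0, hw1, hw2⟩ := hp
    refine ⟨fun v => r' * w v, fun v => mul_nonneg h0 (hw0 v v.2), ?_⟩
    rw [h]
    rw [Finset.sum_coe_sort V (fun v => (r' * w v) • ((v : Fin d → ℝ), (1 : ℝ)))]
    ext1
    · simp only [Prod.fst_sum, Prod.smul_fst, mul_smul, ← Finset.smul_sum, hw2]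
    · simp only [Prod.snd_sum, Prod.smul_snd, smul_eq_mul, mul_one, ← Finset.mul_sum, hw1]
  · rintro ⟨l, h0, h⟩
    have h1 := congrArg Prod.fst h
    have h2 := congrArg Prod.snd h
    simp only [Prod.fst_sum, Prod.smul_fst, Prod.snd_sum, Prod.smul_snd, smul_eq_mul, mul_one] at h1 h2
    rw [mem_polyCone_iff]
    have hr : 0 ≤ r := h2 ▸ Finset.sum_nonneg fun i _ => h0 i
    refine ⟨hr, ?_⟩
    rcases hr.eq_or_lt with hr0 | hr0
    · rw [← hr0] at h2 ⊢
      rw [Finset.sum_eq_zero_iff_of_nonneg fun i _ => h0 i] at h2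
      obtain ⟨v, hv⟩ := hne
      refine ⟨v, subset_convexHull ℝ _ hv, ?_⟩
      rw [← h1, Finset.sum_eq_zero]
      · simp
      · intro i hi; rw [h2 i hi]; simp
    · refine ⟨r⁻¹ • x, ?_, by simp [smul_smul, hr0.ne']⟩
      rw [← h1, Finset.smul_sum]
      simp only [smul_smul]
      refine (convex_convexHull ℝ _).sum_mem (fun i _ => mul_nonneg (by positivity) (h0 i)) ?_
        (fun i _ => subset_convexHull ℝ _ i.2)
      rw [← Finset.mul_sum, h2, inv_mul_cancel₀ hr0.ne']

lemma polyCone_closed {P : Set (Fin d → ℝ)} (hP : IsCompact P) (x q : (Fin d → ℝ) × ℝ)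
    (h : ∃ᶠ e : ℝ in 𝓝[>] 0, x + e • q ∈ polyCone P) : x ∈ polyCone P := by
  let f : ℝ × (Fin d → ℝ) → (Fin d → ℝ) × ℝ := fun z => (z.1 • z.2, z.1)
  have hf : Continuous f := by fun_prop
  have hc : IsCompact (f '' (Set.Icc 0 (x.2 + 1) ×ˢ P)) := (isCompact_Icc.prod hP).image hf
  have ht : Tendsto (fun e : ℝ => x + e • q) (𝓝[>] 0) (𝓝 x) := by
    have : Tendsto (fun e : ℝ => x + e • q) (𝓝 0) (𝓝 (x + (0 : ℝ) • q)) := by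
      apply Continuous.tendsto; fun_prop
    rw [zero_smul, add_zero] at this
    exact this.mono_left nhdsWithin_le_nhds
  have hlt : ∀ᶠ e : ℝ in 𝓝[>] 0, (x + e • q).2 < x.2 + 1 :=
    ((continuous_snd.tendsto x).comp ht).eventually (gt_mem_nhds (by linarith))
  have hmem : x ∈ f '' (Set.Icc 0 (x.2 + 1) ×ˢ P) := by
    refine hc.isClosed.mem_of_frequently_of_tendsto ?_ ht
    refine (h.and_eventually hlt).mono ?_
    rintro e ⟨⟨r, h0, p, hp, he⟩, h2⟩
    refine ⟨(r, p), ⟨⟨h0, ?_⟩, hp⟩, he.symm⟩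
    rw [he] at h2
    exact h2.le
  obtain ⟨⟨r, p⟩, ⟨hr, hp⟩, rfl⟩ := hmem
  exact ⟨r, hr.1, p, hp, rfl⟩

lemma KK_add {E : Type*} [AddCommGroup E] [Module ℝ E] {ι : Type*} [Fintype ι] {a : ι → E} {x y : E}
    (hx : x ∈ {x | ∃ l : ι → ℝ, (∀ i, 0 ≤ l i) ∧ ∑ i, l i • a i = x})
    (hy : y ∈ {x | ∃ l : ι → ℝ, (∀ i, 0 ≤ l i) ∧ ∑ i, l i • a i = x}) :
    x + y ∈ {x | ∃ l : ι → ℝ, (∀ i, 0 ≤ l i) ∧ ∑ i, l i • a i = x} := by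
  obtain ⟨l, h0, rfl⟩ := hx
  obtain ⟨m, h1, rfl⟩ := hy
  exact ⟨fun i => l i + m i, fun i => add_nonneg (h0 i) (h1 i), by
    simp [add_smul, Finset.sum_add_distrib]⟩

lemma KK_smul {E : Type*} [NormedAddCommGroup E] [NormedSpace ℝ E] {ι : Type*} [Fintype ι] {a : ι → E}
    {x : E} (hx : x ∈ KK a) {r : ℝ} (hr : 0 ≤ r) : r • x ∈ KK a := by
  obtain ⟨l, h0, rfl⟩ := hx
  exact ⟨fun i => r * l i, fun i => mul_nonneg hr (h0 i), by
    simp [mul_smul, Finset.smul_sum]⟩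

lemma add_interior {E : Type*} [NormedAddCommGroup E] [NormedSpace ℝ E] {ι : Type*} [Fintype ι]
    {a : ι → E} {x q : E} (hx : x ∈ KK a) (hq : q ∈ interior (KK a)) {e : ℝ} (he : 0 < e) :
    x + e • q ∈ interior (KK a) := by
  have hopen : IsOpen ((fun y : E => e⁻¹ • (y - x)) ⁻¹' interior (KK a)) :=
    isOpen_interior.preimage (by fun_prop)
  refine mem_interior.2 ⟨_, ?_, hopen, ?_⟩
  · intro y hy
    have h1 := KK_add hx (KK_smul (interior_subset hy) he.le)
    rw [smul_smul, mul_inv_cancel₀ he.ne', one_smul] at h1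
    have : x + (y - x) = y := by abel
    rw [this] at h1
    exact h1
  · simp only [Set.mem_preimage, add_sub_cancel_left, smul_smul, inv_mul_cancel₀ he.ne', one_smul]
    exact hq

lemma freq_iff {E : Type*} [NormedAddCommGroup E] [NormedSpace ℝ E] {ι : Type*} [Fintype ι]
    {a : ι → E} {x q : E} (hq : q ∈ interior (KK a))
    (hcl : (∃ᶠ e : ℝ in 𝓝[>] 0, x + e • q ∈ KK a) → x ∈ KK a) :
    (∃ᶠ e : ℝ in 𝓝[>] 0, x + e • q ∈ KK a) ↔ x ∈ KK a := by
  refine ⟨hcl, fun h => Eventually.frequently ?_⟩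
  filter_upwards [self_mem_nhdsWithin] with e he
  exact interior_subset (add_interior h hq he)

lemma freq_iff' {E : Type*} [NormedAddCommGroup E] [NormedSpace ℝ E] {ι : Type*} [Fintype ι]
    {a : ι → E} {x q : E} (hq : q ∈ interior (KK a)) :
    (∃ᶠ e : ℝ in 𝓝[>] 0, x + e • (-q) ∈ KK a) ↔ x ∈ interior (KK a) := by
  constructor
  · intro h
    obtain ⟨e, h1, h2⟩ := (h.and_eventually self_mem_nhdsWithin).exists
    have := add_interior h1 hq h2
    simpa using this
  · intro h
    have ht : Tendsto (fun e : ℝ => x + e • (-q)) (𝓝[>] 0) (𝓝 x) := by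
      have : Tendsto (fun e : ℝ => x + e • (-q)) (𝓝 0) (𝓝 (x + (0 : ℝ) • (-q))) := by
        apply Continuous.tendsto; fun_prop
      rw [zero_smul, add_zero] at this
      exact this.mono_left nhdsWithin_le_nhds
    exact (ht.eventually (mem_interior_iff_mem_nhds.1 h)).frequently

end cone

section count
variable {d : ℕ}

noncomputable def cnt (S : Set ((Fin d → ℤ) × ℤ)) (k : ℤ) : ℕ := ({z ∈ S | z.2 = k}).ncard

noncomputable def FF (S : Set ((Fin d → ℤ) × ℤ)) : PowerSeries ℤ :=
  PowerSeries.mk fun k => (cnt S (k : ℤ) : ℤ)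

/-- all levels finite, nonnegative heights -/
def Nice (S : Set ((Fin d → ℤ) × ℤ)) : Prop :=
  (∀ z ∈ S, 0 ≤ z.2) ∧ ∀ k : ℤ, {z ∈ S | z.2 = k}.Finite

lemma Nice.mono {S T : Set ((Fin d → ℤ) × ℤ)} (hT : Nice T) (h : S ⊆ T) : Nice S :=
  ⟨fun z hz => hT.1 z (h hz), fun k => (hT.2 k).subset fun _ hz => ⟨h hz.1, hz.2⟩⟩

lemma Nice.cnt_neg {S : Set ((Fin d → ℤ) × ℤ)} (h : Nice S) {k : ℤ} (hk : k < 0) : cnt S k = 0 := by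
  have : {z ∈ S | z.2 = k} = ∅ := by
    ext z
    simp only [Set.mem_ofPred_eq, Set.mem_empty_iff_false, iff_false, not_and]
    intro hz h'
    have := h.1 z hz
    omega
  rw [cnt, this, Set.ncard_empty]

lemma cnt_shift (S : Set ((Fin d → ℤ) × ℤ)) (p : (Fin d → ℤ) × ℤ) (hp : p.2 = 1) (k : ℤ) :
    cnt ((fun z => p + z) '' S) k = cnt S (k - 1) := by
  unfold cnt
  rw [← Set.ncard_image_of_injective {z ∈ S | z.2 = k - 1} (add_right_injective p)]
  congr 1
  ext z
  constructor
  · rintro ⟨⟨y, hy, rfl⟩, hz⟩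
    refine ⟨y, ⟨hy, ?_⟩, rfl⟩
    simp only [Prod.snd_add, hp] at hz
    omega
  · rintro ⟨y, ⟨hy, hz⟩, rfl⟩
    refine ⟨⟨y, hy, rfl⟩, ?_⟩
    simp only [Prod.snd_add, hp]
    omega

lemma cnt_union {S T : Set ((Fin d → ℤ) × ℤ)} (hS : Nice S) (hT : Nice T) (h : Disjoint S T) (k : ℤ) :
    cnt (S ∪ T) k = cnt S k + cnt T k := by
  unfold cnt
  rw [← Set.ncard_union_eq _ (hS.2 k) (hT.2 k)]
  · congr 1
    ext z
    simp only [Set.mem_ofPred_eq, Set.mem_union]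
    tauto
  · exact h.mono (fun _ h => h.1) (fun _ h => h.1)

lemma cnt_reflect (S : Set ((Fin d → ℤ) × ℤ)) (s : (Fin d → ℤ) × ℤ) (k : ℤ) :
    cnt {z | s - z ∈ S} k = cnt S (s.2 - k) := by
  unfold cnt
  rw [← Set.ncard_image_of_injective {z | z ∈ {z | s - z ∈ S} ∧ z.2 = k} (sub_right_injective (b := s))]
  congr 1
  ext z
  constructor
  · rintro ⟨y, ⟨hy, hz⟩, rfl⟩
    refine ⟨hy, ?_⟩
    simp only [Prod.snd_sub, hz]
  · rintro ⟨hy, hz⟩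
    refine ⟨s - z, ⟨?_, ?_⟩, ?_⟩
    · simpa using hy
    · simp only [Prod.snd_sub, hz]; omega
    · simp

lemma FF_union {S T : Set ((Fin d → ℤ) × ℤ)} (hS : Nice S) (hT : Nice T) (h : Disjoint S T) :
    FF (S ∪ T) = FF S + FF T := by
  ext k
  simp [FF, cnt_union hS hT h]

lemma FF_shift {S : Set ((Fin d → ℤ) × ℤ)} (hS : Nice S) (p : (Fin d → ℤ) × ℤ) (hp : p.2 = 1) :
    FF ((fun z => p + z) '' S) = PowerSeries.X * FF S := by
  ext k
  rcases k with _ | k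
  · simp only [FF, PowerSeries.coeff_mk, cnt_shift S p hp, PowerSeries.coeff_zero_X_mul]
    rw [hS.cnt_neg (by simp)]
    rfl
  · simp only [FF, PowerSeries.coeff_mk, cnt_shift S p hp, PowerSeries.coeff_succ_X_mul]
    simp

lemma FF_biUnion {κ : Type*} [DecidableEq κ] (T : Finset κ) (f : κ → Set ((Fin d → ℤ) × ℤ))
    {K : Set ((Fin d → ℤ) × ℤ)} (hK : Nice K) (hf : ∀ i ∈ T, f i ⊆ K)
    (hdis : ∀ i ∈ T, ∀ j ∈ T, ∀ z, z ∈ f i → z ∈ f j → i = j) :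
    FF {z | ∃ i ∈ T, z ∈ f i} = ∑ i ∈ T, FF (f i) := by
  induction T using Finset.induction_on with
  | empty =>
    ext k
    simp [FF, cnt]
  | insert i T hi ih =>
    rw [Finset.sum_insert hi, ← ih (fun j hj => hf j (Finset.mem_insert_of_mem hj))
      (fun j hj j' hj' => hdis j (Finset.mem_insert_of_mem hj) j' (Finset.mem_insert_of_mem hj')),
      ← FF_union]
    · congr 1
      ext z
      simp
    · exact hK.mono (hf i (Finset.mem_insert_self _ _))
    · refine hK.mono ?_
      rintro z ⟨j, hj, hz⟩
      exact hf j (Finset.mem_insert_of_mem hj) hz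
    · rw [Set.disjoint_left]
      rintro z hz ⟨j, hj, hz'⟩
      have := hdis i (Finset.mem_insert_self _ _) j (Finset.mem_insert_of_mem hj) z hz hz'
      exact hi (this ▸ hj)

lemma lcp_add (z z' : (Fin d → ℤ) × ℤ) :
    latticeCastPair (z + z') = latticeCastPair z + latticeCastPair z' := by
  ext <;> simp [latticeCastPair]

lemma lcp_sub (z z' : (Fin d → ℤ) × ℤ) :
    latticeCastPair (z - z') = latticeCastPair z - latticeCastPair z' := by
  ext <;> simp [latticeCastPair]

lemma lcp_sum {κ : Type*} (T : Finset κ) (f : κ → (Fin d → ℤ) × ℤ) :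
    latticeCastPair (∑ i ∈ T, f i) = ∑ i ∈ T, latticeCastPair (f i) := by
  classical
  induction T using Finset.induction_on with
  | empty => ext <;> simp [latticeCastPair]
  | insert i T hi ih => rw [Finset.sum_insert hi, Finset.sum_insert hi, lcp_add, ih]

variable {ι : Type*} [Fintype ι]

/-- partially truncated half-open simplicial cone -/
def Bx {a : ι → (Fin d → ℝ) × ℝ} (q : (Fin d → ℝ) × ℝ) (B : Bs a) (J : Finset B.1) :
    Set ((Fin d → ℤ) × ℤ) :=
  {z | ∀ b, lo ((bas B).repr q b < 0) ((bas B).repr (latticeCastPair z) b) ∧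
    (b ∈ J → ¬ lo ((bas B).repr q b < 0) ((bas B).repr (latticeCastPair z) b - 1))}

lemma Nice_KK {a : ι → (Fin d → ℝ) × ℝ} {al : ι → (Fin d → ℤ) × ℤ}
    (hal : ∀ i, latticeCastPair (al i) = a i) (hal1 : ∀ i, (al i).2 = 1) :
    Nice {z | latticeCastPair z ∈ KK a} := by
  have key : ∀ z : (Fin d → ℤ) × ℤ, latticeCastPair z ∈ KK a → ∃ l : ι → ℝ, (∀ i, 0 ≤ l i) ∧
      ∑ i, l i = z.2 ∧ ∀ j, ∑ i, l i * (al i).1 j = z.1 j := by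
    rintro z ⟨l, h0, h⟩
    refine ⟨l, h0, ?_, fun j => ?_⟩
    · have := congrArg Prod.snd h
      simpa [← hal, latticeCastPair, Prod.snd_sum, hal1] using this
    · have := congrFun (congrArg Prod.fst h) j
      simpa [← hal, latticeCastPair, Prod.fst_sum] using this
  refine ⟨fun z hz => ?_, fun k => ?_⟩
  · obtain ⟨l, h0, h1, -⟩ := key z hz
    have : (0 : ℝ) ≤ z.2 := h1 ▸ Finset.sum_nonneg fun i _ => h0 i
    exact_mod_cast this
  · classical
    let M : Fin d → ℤ := fun j => ∑ i, k * |(al i).1 j|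
    refine (Set.finite_Icc ((-M, k) : (Fin d → ℤ) × ℤ) (M, k)).subset ?_
    rintro z ⟨hz, rfl⟩
    obtain ⟨l, h0, h1, h2⟩ := key z hz
    have hb : ∀ j, |z.1 j| ≤ M j := by
      intro j
      have : (|z.1 j| : ℝ) ≤ ∑ i, (z.2 : ℝ) * |((al i).1 j : ℝ)| := by
        rw [← h2 j]
        refine (Finset.abs_sum_le_sum_abs _ _).trans (Finset.sum_le_sum fun i _ => ?_)
        rw [abs_mul, abs_of_nonneg (h0 i)]
        refine mul_le_mul_of_nonneg_right ?_ (abs_nonneg _)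
        rw [← h1]
        exact Finset.single_le_sum (fun j _ => h0 j) (Finset.mem_univ i)
      exact_mod_cast this
    refine ⟨⟨fun j => ?_, le_rfl⟩, ⟨fun j => ?_, le_rfl⟩⟩
    · exact (abs_le.1 (hb j)).1
    · exact (abs_le.1 (hb j)).2

lemma Bx_sub {a : ι → (Fin d → ℝ) × ℝ} (q : (Fin d → ℝ) × ℝ) (B : Bs a) (J : Finset B.1) :
    Bx q B J ⊆ {z | latticeCastPair z ∈ KK a} := fun _ hz => KB_sub B fun b => (hz b).1.1

lemma lo_of_sub_one {o : Prop} {x : ℝ} (h : lo o (x - 1)) : lo o x :=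
  ⟨by linarith [h.1], fun _ => by linarith [h.1]⟩

lemma Bx_step {a : ι → (Fin d → ℝ) × ℝ} {al : ι → (Fin d → ℤ) × ℤ}
    (hal : ∀ i, latticeCastPair (al i) = a i) (hal1 : ∀ i, (al i).2 = 1)
    (q : (Fin d → ℝ) × ℝ) (B : Bs a) [DecidableEq B.1] (J : Finset B.1) (b : B.1) (hb : b ∉ J) :
    (1 - PowerSeries.X) * FF (Bx q B J) = FF (Bx q B (insert b J)) := by
  have hN := Nice_KK hal hal1
  have hrep : ∀ (z : (Fin d → ℤ) × ℤ) (c : B.1), (bas B).repr (latticeCastPair (z - al b)) c =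
      (bas B).repr (latticeCastPair z) c - if c = b then 1 else 0 := by
    intro z c
    rw [lcp_sub, hal, ← bas_apply B b, map_sub, Module.Basis.repr_self, Finsupp.sub_apply,
      Finsupp.single_apply]
    simp only [eq_comm]
  have hun : Bx q B J = Bx q B (insert b J) ∪ (fun z => al b + z) '' Bx q B J := by
    ext z
    constructor
    · intro hz
      by_cases h : lo ((bas B).repr q b < 0) ((bas B).repr (latticeCastPair z) b - 1)
      · right
        refine ⟨z - al b, fun c => ?_, by simp⟩
        rw [hrep]
        by_cases hc : c = b
        · subst hc
          simp only [if_true]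
          exact ⟨h, fun h' => absurd h' hb⟩
        · simpa [hc] using hz c
      · left
        intro c
        refine ⟨(hz c).1, fun hc => ?_⟩
        rcases Finset.mem_insert.1 hc with rfl | hc
        · exact h
        · exact (hz c).2 hc
    · rintro (hz | ⟨y, hy, rfl⟩)
      · exact fun c => ⟨(hz c).1, fun hc => (hz c).2 (Finset.mem_insert_of_mem hc)⟩
      · intro c
        have h1 := hrep (al b + y) c
        rw [add_sub_cancel_left] at h1
        have h2 := hy c
        rw [h1] at h2
        by_cases hc : c = b
        · subst hc
          simp only [if_true] at h2
          exact ⟨lo_of_sub_one h2.1, fun h' => absurd h' hb⟩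
        · simpa [hc] using h2
  have hdis : Disjoint (Bx q B (insert b J)) ((fun z => al b + z) '' Bx q B J) := by
    rw [Set.disjoint_left]
    rintro _ hz ⟨y, hy, rfl⟩
    have h1 := hrep (al b + y) b
    rw [add_sub_cancel_left, if_pos rfl] at h1
    have h2 := (hz b).2 (Finset.mem_insert_self _ _)
    rw [← h1] at h2
    exact h2 (hy b).1
  have hNJ := hN.mono (Bx_sub q B J)
  have hsub : (fun z => al b + z) '' Bx q B J ⊆ Bx q B J := by
    conv_rhs => rw [hun]
    exact Set.subset_union_right
  have h1 : FF (Bx q B J) = FF (Bx q B (insert b J)) + PowerSeries.X * FF (Bx q B J) := by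
    conv_lhs => rw [hun]
    rw [FF_union (hN.mono (Bx_sub _ _ _)) (hNJ.mono hsub) hdis, FF_shift hNJ _ (hal1 b)]
  rw [sub_mul, one_mul, sub_eq_iff_eq_add]
  exact h1

lemma Bx_pow {a : ι → (Fin d → ℝ) × ℝ} {al : ι → (Fin d → ℤ) × ℤ}
    (hal : ∀ i, latticeCastPair (al i) = a i) (hal1 : ∀ i, (al i).2 = 1)
    (q : (Fin d → ℝ) × ℝ) (B : Bs a) (J : Finset B.1) :
    (1 - PowerSeries.X) ^ J.card * FF (Bx q B ∅) = FF (Bx q B J) := by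
  classical
  induction J using Finset.induction_on with
  | empty => simp
  | insert b J hb ih =>
    rw [Finset.card_insert_of_notMem hb, pow_succ', mul_assoc, ih, Bx_step hal hal1 q B J b hb]

lemma card_B {a : ι → (Fin d → ℝ) × ℝ} (B : Bs a) : (Finset.univ : Finset B.1).card = d + 1 := by
  have := Module.finrank_eq_card_basis (bas B)
  rw [Finset.card_univ, ← this]
  simp

lemma Bx_reflect {a : ι → (Fin d → ℝ) × ℝ} {al : ι → (Fin d → ℤ) × ℤ}
    (hal : ∀ i, latticeCastPair (al i) = a i) (hal1 : ∀ i, (al i).2 = 1)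
    {q : (Fin d → ℝ) × ℝ} (hq : Gen a q) (B : Bs a) (k : ℤ) :
    cnt (Bx (-q) B Finset.univ) k = cnt (Bx q B Finset.univ) (d + 1 - k) := by
  have hs : (∑ b : B.1, al b).2 = d + 1 := by
    rw [Prod.snd_sum]
    simp only [hal1, Finset.sum_const, card_B]
    simp
  rw [← hs, ← cnt_reflect]
  congr 1
  ext z
  refine forall_congr' fun b => ?_
  have hr : (bas B).repr (latticeCastPair ((∑ b : B.1, al b) - z)) b =
      1 - (bas B).repr (latticeCastPair z) b := by
    rw [lcp_sub, lcp_sum]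
    simp only [hal, ← bas_apply]
    rw [map_sub, Finsupp.sub_apply]
    congr 1
    have := (bas B).repr_sum_self (fun _ => (1 : ℝ))
    simp only [one_smul] at this
    rw [this]
  rw [hr]
  have hq0 := hq.repr_ne B b
  simp only [map_neg, Finsupp.neg_apply, Finset.mem_univ, true_imp_iff]
  generalize (bas B).repr q b = u at *
  generalize (bas B).repr (latticeCastPair z) b = x at *
  unfold lo
  rcases lt_or_gt_of_ne hq0 with h | h
  · have h' : ¬ (-u < 0) := by linarith
    simp only [h, h', true_imp_iff, false_imp_iff, and_true]
    constructor
    · rintro ⟨h1, h2⟩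
      exact ⟨⟨by linarith, by linarith⟩, fun h3 => by linarith [h3.2]⟩
    · rintro ⟨⟨h1, h2⟩, h3⟩
      exact ⟨by by_contra h4; push Not at h4; exact h3 ⟨by linarith, by linarith⟩, fun h4 => by linarith⟩
  · have h' : ¬ (u < 0) := by linarith
    have h'' : -u < 0 := by linarith
    simp only [h'', h', true_imp_iff, false_imp_iff, and_true]
    constructor
    · rintro ⟨⟨h1, h2⟩, h3⟩
      exact ⟨by by_contra h4; push Not at h4; exact h3 ⟨by linarith, by linarith⟩, fun h4 => by linarith⟩
    · rintro ⟨h1, h2⟩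
      exact ⟨⟨by linarith, by linarith⟩, fun h3 => by linarith [h3.2]⟩

/-- main decomposition -/
lemma main_dec {a : ι → (Fin d → ℝ) × ℝ} {al : ι → (Fin d → ℤ) × ℤ}
    (hal : ∀ i, latticeCastPair (al i) = a i) (hal1 : ∀ i, (al i).2 = 1)
    {w : ι → ℝ} (hw : GenW a w) {q : (Fin d → ℝ) × ℝ} (hq : Gen a q)
    (T : Finset (Bs a)) (hT : ∀ B, B ∈ T ↔ B ∈ TT a w) :
    (1 - PowerSeries.X) ^ (d + 1) *
      FF {z | ∃ᶠ e : ℝ in 𝓝[>] 0, latticeCastPair z + e • q ∈ KK a} =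
    ∑ B ∈ T, FF (Bx q B Finset.univ) := by
  classical
  have h1 : {z | ∃ᶠ e : ℝ in 𝓝[>] 0, latticeCastPair z + e • q ∈ KK a} =
      {z | ∃ B ∈ T, z ∈ Bx q B ∅} := by
    ext z
    rw [Set.mem_ofPred_eq, ← HB_exists (LinearMap.snd ℝ (Fin d → ℝ) ℝ) (fun i => by
      rw [← hal]; simp [latticeCastPair, hal1]) hw hq]
    simp only [hT, Set.mem_ofPred_eq, Bx, HB, Finset.notMem_empty, false_imp_iff, and_true]
  rw [h1, FF_biUnion T _ (Nice_KK hal hal1) (fun B _ => Bx_sub q B ∅), Finset.mul_sum]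
  · refine Finset.sum_congr rfl fun B _ => ?_
    rw [← Bx_pow hal hal1 q B Finset.univ, card_B]
  · intro B hB B' hB' z hz hz'
    exact HB_unique hw hq ((hT B).1 hB) ((hT B').1 hB') (fun b => (hz b).1) (fun b => (hz' b).1)

end count
end Hibi

/-- Hibi: the `h*`-polynomial of a reflexive lattice polytope is
palindromic: `h*_k = h*_(d-k)` for all `0 ≤ k ≤ d`. -/
theorem stmt_8 (d : ℕ) (V : Finset (Fin d → ℝ))
    (hV : ∀ v ∈ V, ∀ j, ∃ z : ℤ, v j = (z : ℝ))
    (P : Set (Fin d → ℝ)) (hP : P = convexHull ℝ (V : Set (Fin d → ℝ)))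
    (hdim : affineSpan ℝ P = ⊤)
    (hreflexive : ∃ p : (Fin d → ℤ) × ℤ, p.2 = 1 ∧
      {z : (Fin d → ℤ) × ℤ | latticeCastPair z ∈ interior (polyCone P)} =
        (fun z => p + z) '' {z : (Fin d → ℤ) × ℤ | latticeCastPair z ∈ polyCone P})
    (N : ℕ → ℕ)
    (hN : ∀ i, N i = Nat.card {x : Fin d → ℤ | (fun j => (x j : ℝ)) ∈ (i : ℝ) • P})
    (hstar : ℕ → ℤ) (hdeg : ∀ i, d < i → hstar i = 0)
    (hEhr : (1 - PowerSeries.X) ^ (d + 1) * PowerSeries.mk (fun i => (N i : ℤ)) =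
      PowerSeries.mk hstar) :
    ∀ i ≤ d, hstar i = hstar (d - i) := by
  classical
  obtain ⟨p, hp1, hrefl⟩ := hreflexive
  have hVne : V.Nonempty := by
    by_contra h
    rw [Finset.not_nonempty_iff_eq_empty] at h
    subst h
    simp only [Finset.coe_empty, convexHull_empty] at hP
    subst hP
    rw [AffineSubspace.span_empty] at hdim
    exact AffineSubspace.bot_ne_top _ _ _ hdim
  have hPc : IsCompact P := by
    rw [hP]; exact V.finite_toSet.isCompact_convexHull ℝ
  let a : V → (Fin d → ℝ) × ℝ := fun v => ((v : Fin d → ℝ), (1 : ℝ))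
  have hK : polyCone P = Hibi.KK a := by rw [hP]; exact Hibi.polyCone_eq V hVne
  have hex : ∀ v : V, ∃ z : Fin d → ℤ, ∀ j, (v : Fin d → ℝ) j = z j := fun v => by
    choose z hz using hV v v.2
    exact ⟨z, hz⟩
  choose al0 hal0 using hex
  let al : V → (Fin d → ℤ) × ℤ := fun v => (al0 v, 1)
  have hal : ∀ i, latticeCastPair (al i) = a i := by
    intro i
    ext j
    · simp [al, a, latticeCastPair, hal0]
    · simp [al, a, latticeCastPair]
  have hal1 : ∀ i, (al i).2 = 1 := fun _ => rfl
  have hnice := Hibi.Nice_KK hal hal1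
  have h0mem : (0 : (Fin d → ℤ) × ℤ) ∈ {z : (Fin d → ℤ) × ℤ | latticeCastPair z ∈ polyCone P} := by
    rw [hK]
    exact ⟨0, fun _ => le_rfl, by ext <;> simp [latticeCastPair]⟩
  have hint : (interior (Hibi.KK a)).Nonempty := by
    have : p + 0 ∈ (fun z => p + z) '' {z : (Fin d → ℤ) × ℤ | latticeCastPair z ∈ polyCone P} :=
      ⟨0, h0mem, rfl⟩
    rw [← hrefl, hK] at this
    exact ⟨_, this⟩
  obtain ⟨q, hqi, hq⟩ := Hibi.exists_gen a _ isOpen_interior hint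
  obtain ⟨w, hw⟩ := Hibi.exists_genW a
  let T : Finset (Hibi.Bs a) := Finset.univ.filter fun B => B ∈ Hibi.TT a w
  have hT : ∀ B, B ∈ T ↔ B ∈ Hibi.TT a w := by simp [T]
  have e1 := Hibi.main_dec hal hal1 hw hq T hT
  have e2 := Hibi.main_dec hal hal1 hw hq.neg T hT
  have s1 : {z : (Fin d → ℤ) × ℤ | ∃ᶠ e : ℝ in nhdsWithin 0 (Set.Ioi 0),
      latticeCastPair z + e • q ∈ Hibi.KK a} = {z | latticeCastPair z ∈ Hibi.KK a} := by
    ext z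
    refine Hibi.freq_iff hqi fun h => ?_
    rw [← hK] at h ⊢
    exact Hibi.polyCone_closed hPc _ _ h
  have s2 : {z : (Fin d → ℤ) × ℤ | ∃ᶠ e : ℝ in nhdsWithin 0 (Set.Ioi 0),
      latticeCastPair z + e • (-q) ∈ Hibi.KK a} =
      (fun z => p + z) '' {z | latticeCastPair z ∈ Hibi.KK a} := by
    rw [← hK, ← hrefl]
    ext z
    rw [hK]
    exact Hibi.freq_iff' hqi
  rw [s1] at e1
  rw [s2, Hibi.FF_shift hnice p hp1] at e2
  have hF : Hibi.FF {z | latticeCastPair z ∈ Hibi.KK a} = PowerSeries.mk (fun i => (N i : ℤ)) := by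
    ext k
    simp only [Hibi.FF, PowerSeries.coeff_mk]
    congr 1
    rw [hN, Hibi.cnt, ← Nat.card_coe_set_eq, ← hK]
    refine Nat.card_congr ⟨fun z => ⟨z.1.1, ?_⟩, fun x => ⟨(x.1, (k : ℤ)), ?_, rfl⟩, ?_, ?_⟩
    · have h1 : latticeCastPair z.1 ∈ polyCone P := z.2.1
      have h2 : z.1.2 = k := z.2.2
      rw [latticeCastPair, Hibi.mem_polyCone_iff, h2] at h1
      simpa using h1.2
    · have h1 : (fun j => (x.1 j : ℝ)) ∈ (k : ℝ) • P := x.2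
      change latticeCastPair (x.1, (k : ℤ)) ∈ polyCone P
      rw [latticeCastPair, Hibi.mem_polyCone_iff]
      simpa using h1
    · rintro ⟨⟨x, m⟩, h1, h2⟩
      simp only at h2
      subst h2
      rfl
    · intro x
      rfl
  rw [hF, hEhr] at e1
  rw [hF, mul_left_comm, hEhr] at e2
  intro i hi
  have c1 := congrArg (PowerSeries.coeff (d - i)) e1
  have c2 := congrArg (PowerSeries.coeff (i + 1)) e2
  rw [PowerSeries.coeff_succ_X_mul] at c2
  simp only [PowerSeries.coeff_mk, map_sum, Hibi.FF] at c1 c2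
  rw [c1, c2]
  refine Finset.sum_congr rfl fun B _ => ?_
  rw [Hibi.Bx_reflect hal hal1 hq]
  congr 2
  push_cast [hi]
  ring
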